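/- Fix an integer k ≥ 1 and a real number c. For each integer m ≥ 1, let (B_t)_{t≥1} be an i.i.d. sequence of uniform random draws from {1,…,m}, and let T_k(m) be the least time t such that every bin b ∈ {1,…,m} satisfies #{s ≤ t : B_s = b} ≥ k. Then lim_{m→∞} P( T_k(m) < m·log m + (k−1)·m·log log m + c·m ) = exp( − e^{−c} / (k−1)! ). -/

import Mathlib

/-- The threshold `m·log m + (k−1)·m·log log m + c·m`. -/
noncomputable def collectThreshold (k : ℕ) (c : ℝ) (m : ℕ) : ℝ :=
  (m : ℝ) * Real.log m + ((k : ℝ) - 1) * m * Real.log (Real.log m) + c * m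

/-- The event `T_k(m) < collectThreshold k c m` depends only on the first
`⌈collectThreshold k c m⌉₊` tosses, so we model the i.i.d. uniform tosses by the uniform
distribution on `Fin ⌈collectThreshold k c m⌉₊ → Fin m`; the probability of the event is the
ratio of the number of favorable outcomes to the number `m ^ ⌈collectThreshold k c m⌉₊` of all
outcomes.  `T_k(m) < x` holds iff there is a time `t` with `(t : ℝ) < x` such that every bin
`b` has received at least `k` balls among the first `t` tosses. -/
noncomputable def probCollectBeforeThreshold (k : ℕ) (c : ℝ) (m : ℕ) : ℝ :=
  (Nat.card {f : Fin ⌈collectThreshold k c m⌉₊ → Fin m //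
      ∃ t : ℕ, (t : ℝ) < collectThreshold k c m ∧
        ∀ b : Fin m,
          k ≤ Nat.card {s : Fin ⌈collectThreshold k c m⌉₊ // (s : ℕ) < t ∧ f s = b}} : ℝ) /
    (m : ℝ) ^ (⌈collectThreshold k c m⌉₊ : ℕ)

/-!
Let `P n` be the probability that `n` uniform balls put at least `k` into each of `m` bins. Give the
bins independent `Po(r)` numbers of balls instead: their total is `Po(m * r)`, and conditionally on
it the balls are distributed uniformly, so the average of `P` over `Po(m * r)` is
`Po(r) [k, ∞) ^ m`. For `r = log m + (k - 1) log log m + c` this tends to `exp (-e⁻ᶜ / (k - 1)!)`,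
because `m * Po(r) [0, k) → e⁻ᶜ / (k - 1)!`. By Chebyshev, `Po(m * r)` is concentrated within `ε m`
of `m * r`; as `P` is monotone, its value at the threshold with constant `c` is asymptotically
between the limits for `c - ε` and `c + ε`, and these are continuous in the constant.
-/

open MeasureTheory ProbabilityTheory Filter Finset Real
open scoped Nat NNReal Topology

section Poisson

lemma hasSum_poisson_mul_descFactorial (r : ℝ≥0) (j : ℕ) :
    HasSum (fun n : ℕ ↦ exp (-r) * r ^ n / n ! * n.descFactorial j) ((r : ℝ) ^ j) := by
  have hlow : ∑ n ∈ range j, exp (-r) * (r : ℝ) ^ n / n ! * n.descFactorial j = 0 :=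
    sum_eq_zero fun n hn ↦ by simp [Nat.descFactorial_of_lt (mem_range.mp hn)]
  rw [← hasSum_nat_add_iff' j, hlow, sub_zero]
  convert! (hasSum_one_poissonMeasure r).mul_right ((r : ℝ) ^ j) using 1
  · ext n
    have hfact : (n ! : ℝ) * (n + j).descFactorial j = (n + j)! := by
      exact_mod_cast Nat.add_sub_cancel n j ▸ Nat.factorial_mul_descFactorial (Nat.le_add_left j n)
    rw [← hfact, pow_add]
    have : ((n + j).descFactorial j : ℝ) ≠ 0 := by
      exact_mod_cast (Nat.descFactorial_pos.mpr (Nat.le_add_left j n)).ne'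
    field_simp
  · rw [one_mul]

lemma hasSum_poisson_mul_sub_sq (r : ℝ≥0) :
    HasSum (fun n : ℕ ↦ exp (-r) * r ^ n / n ! * ((n : ℝ) - r) ^ 2) r := by
  have h := hasSum_poisson_mul_descFactorial r
  convert! ((h 2).add ((h 1).mul_left (1 - 2 * (r : ℝ)))).add ((h 0).mul_left ((r : ℝ) ^ 2)) using 1
  · ext n
    have hsq : (n.descFactorial 2 : ℝ) = n * (n - 1) := by
      simpa [mul_comm] using Nat.cast_descFactorial_two (S := ℝ) n
    rw [hsq, Nat.descFactorial_one, Nat.descFactorial_zero]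
    push_cast
    ring
  · ring

lemma integrable_sub_sq_poissonMeasure (r : ℝ≥0) :
    Integrable (fun n : ℕ ↦ ((n : ℝ) - r) ^ 2) Po(r) := by
  simpa [integrable_poissonMeasure_iff] using (hasSum_poisson_mul_sub_sq r).summable

lemma integral_sub_sq_poissonMeasure (r : ℝ≥0) : ∫ n : ℕ, ((n : ℝ) - r) ^ 2 ∂Po(r) = r := by
  rw [integral_poissonMeasure]
  exact (hasSum_poisson_mul_sub_sq r).tsum_eq

lemma poissonMeasure_real_le_abs_sub_le (r : ℝ≥0) {d : ℝ} (hd : 0 < d) :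
    Po(r).real {n : ℕ | d ≤ |(n : ℝ) - r|} ≤ r / d ^ 2 := by
  have hmarkov := mul_meas_ge_le_integral_of_nonneg (.of_forall fun n : ℕ ↦ sq_nonneg ((n : ℝ) - r))
    (integrable_sub_sq_poissonMeasure r) (d ^ 2)
  rw [integral_sub_sq_poissonMeasure] at hmarkov
  rw [le_div_iff₀ (by positivity), mul_comm]
  convert! hmarkov using 5
  rw [← sq_le_sq₀ hd.le (abs_nonneg _), sq_abs]

lemma poissonMeasure_real_Iio (r : ℝ≥0) (k : ℕ) :
    Po(r).real (Set.Iio k) = ∑ i ∈ range k, Po(r).real {i} := by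
  rw [sum_measureReal_singleton, coe_range]

end Poisson

section MonotoneAverage

variable {μ : Measure ℕ} [IsProbabilityMeasure μ] {a : ℕ → ℝ}

lemma integrable_of_mem_Icc (ha : ∀ j, a j ∈ Set.Icc 0 1) : Integrable a μ :=
  .of_mem_Icc 0 1 (measurable_of_countable a).aemeasurable (.of_forall ha)

lemma le_integral_add_measureReal_Iio (hmono : Monotone a) (ha : ∀ j, a j ∈ Set.Icc 0 1) (n : ℕ) :
    a n ≤ ∫ j, a j ∂μ + μ.real (Set.Iio n) := by
  have hint : Integrable ((Set.Iio n).indicator (1 : ℕ → ℝ)) μ :=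
    (integrable_const 1).indicator (.of_discrete)
  rw [← integral_indicator_one .of_discrete, ← integral_add (integrable_of_mem_Icc ha) hint]
  calc a n = ∫ _, a n ∂μ := by simp
    _ ≤ _ := integral_mono (integrable_const _) ((integrable_of_mem_Icc ha).add hint) fun j ↦ ?_
  by_cases hj : j < n
  · simpa [hj] using (ha n).2.trans (le_add_of_nonneg_left (ha j).1)
  · simpa [hj] using hmono (not_lt.mp hj)

lemma integral_le_add_measureReal_Ioi (hmono : Monotone a) (ha : ∀ j, a j ∈ Set.Icc 0 1) (n : ℕ) :
    ∫ j, a j ∂μ ≤ a n + μ.real (Set.Ioi n) := by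
  have hint : Integrable ((Set.Ioi n).indicator (1 : ℕ → ℝ)) μ :=
    (integrable_const 1).indicator (.of_discrete)
  calc ∫ j, a j ∂μ ≤ ∫ j, (a n + (Set.Ioi n).indicator 1 j) ∂μ :=
        integral_mono (integrable_of_mem_Icc ha) ((integrable_const _).add hint) fun j ↦ ?_
    _ = a n + μ.real (Set.Ioi n) := by
        rw [integral_add (integrable_const _) hint, integral_indicator_one .of_discrete]
        simp
  by_cases hj : n < j
  · simpa [hj] using (ha j).2.trans (le_add_of_nonneg_left (ha n).1)
  · simpa [hj] using hmono (not_lt.mp hj)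

lemma le_integral_poissonMeasure_add (hmono : Monotone a) (ha : ∀ j, a j ∈ Set.Icc 0 1)
    {r : ℝ≥0} {d : ℝ} (hd : 0 < d) {n : ℕ} (hn : n + d ≤ r) :
    a n ≤ ∫ j, a j ∂Po(r) + r / d ^ 2 := by
  have hsub : Set.Iio n ⊆ {j : ℕ | d ≤ |(j : ℝ) - r|} := fun j (hj : j < n) ↦ by
    have : (j : ℝ) < n := mod_cast hj
    rw [Set.mem_ofPred_eq, le_abs]
    right
    linarith
  grw [le_integral_add_measureReal_Iio (μ := Po(r)) hmono ha n, measureReal_mono hsub,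
    poissonMeasure_real_le_abs_sub_le r hd]

lemma integral_poissonMeasure_le_add (hmono : Monotone a) (ha : ∀ j, a j ∈ Set.Icc 0 1)
    {r : ℝ≥0} {d : ℝ} (hd : 0 < d) {n : ℕ} (hn : r + d ≤ n + 1) :
    ∫ j, a j ∂Po(r) ≤ a n + r / d ^ 2 := by
  have hsub : Set.Ioi n ⊆ {j : ℕ | d ≤ |(j : ℝ) - r|} := fun j (hj : n < j) ↦ by
    have : (n + 1 : ℝ) ≤ j := mod_cast hj
    rw [Set.mem_ofPred_eq, le_abs]
    left
    linarith
  grw [integral_le_add_measureReal_Ioi (μ := Po(r)) hmono ha n, measureReal_mono hsub,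
    poissonMeasure_real_le_abs_sub_le r hd]

end MonotoneAverage

section Words

variable {ι : Type*}

lemma natCard_init {n : ℕ} (P : (Fin n → ι) → Prop) :
    Nat.card {f : Fin (n + 1) → ι // P (Fin.init f)} =
      Nat.card ι * Nat.card {f : Fin n → ι // P f} := by
  rw [← Nat.card_prod]
  exact Nat.card_congr
    { toFun f := (f.1 (Fin.last n), ⟨Fin.init f.1, f.2⟩)
      invFun p := ⟨Fin.snoc p.2.1 p.1, by simpa using p.2.2⟩
      left_inv f := by simp
      right_inv p := by simp }

lemma natCard_lt_and_eq_mono {N s t : ℕ} (hst : s ≤ t) (f : Fin N → ι) (b : ι) :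
    Nat.card {i : Fin N // (i : ℕ) < s ∧ f i = b} ≤ Nat.card {i : Fin N // (i : ℕ) < t ∧ f i = b} :=
  Nat.card_mono (t := {i : Fin N | (i : ℕ) < t ∧ f i = b}) (Set.toFinite _)
    fun _ hi ↦ ⟨hi.1.trans_le hst, hi.2⟩

end Words

section Occupancy

variable {α ι : Type*} [Fintype α] [DecidableEq ι]

/-- The occupancy numbers of an allocation `f` of the balls `α` to the bins `ι`. -/
def occupancy (f : α → ι) (b : ι) : ℕ := #{a | f a = b}

lemma occupancy_init_le {n : ℕ} (f : Fin (n + 1) → ι) :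
    occupancy (Fin.init f) ≤ occupancy f := fun b ↦
  card_le_card_of_injOn Fin.castSucc (fun s hs ↦ by simpa using! hs)
    (Fin.castSucc_injective n).injOn

lemma natCard_lt_and_eq {n : ℕ} (f : Fin (n + 1) → ι) (b : ι) :
    Nat.card {s : Fin (n + 1) // (s : ℕ) < n ∧ f s = b} = occupancy (Fin.init f) b := by
  rw [Nat.card_eq_fintype_card, Fintype.card_subtype, card_filter, Fin.sum_univ_castSucc,
    occupancy, card_filter]
  simp only [Fin.val_castSucc, Fin.is_lt, true_and, Fin.val_last, lt_self_iff_false, false_and,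
    ↓reduceIte, add_zero]
  rfl

lemma sum_single_eq_occupancy [Finite ι] (f : α → ι) :
    ∑ a, Finsupp.single (f a) 1 = Finsupp.equivFunOnFinite.symm (occupancy f) := by
  ext b
  simp [occupancy, Finsupp.single_apply, Finsupp.finsetSum_apply]

open MvPolynomial in
lemma prod_X_eq_monomial_occupancy [Finite ι] (f : α → ι) :
    ∏ a, (X (f a) : MvPolynomial ι ℕ) =
      monomial (Finsupp.equivFunOnFinite.symm (occupancy f)) 1 := by
  rw [← sum_single_eq_occupancy, monomial_sum_one]
  rfl

variable [Fintype ι]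

lemma sum_occupancy (f : α → ι) : ∑ b, occupancy f b = Fintype.card α :=
  (card_eq_sum_card_fiberwise fun _ _ ↦ mem_univ _).symm

-- Both sides are the coefficient of `∏ b, X b ^ x b` in `(∑ b, X b) ^ n`.
open MvPolynomial in
lemma card_filter_occupancy_eq {n : ℕ} {x : ι → ℕ} (hx : ∑ b, x b = n) :
    #{f : Fin n → ι | occupancy f = x} = Nat.multinomial univ x := by
  have hwords : coeff (Finsupp.equivFunOnFinite.symm x) ((∑ b, X b : MvPolynomial ι ℕ) ^ n) =
      #{f : Fin n → ι | occupancy f = x} := by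
    simp [Fintype.sum_pow, prod_X_eq_monomial_occupancy, coeff_sum, coeff_monomial]
  have hmonomial (k : ι → ℕ) : (∏ b, X b ^ k b : MvPolynomial ι ℕ) =
      monomial (Finsupp.equivFunOnFinite.symm k) 1 := by
    simp [monomial_eq, Finsupp.prod_fintype]
  rw [← hwords, sum_pow_eq_sum_piAntidiag, coeff_sum]
  simp_rw [hmonomial, ← map_natCast (C : ℕ →+* MvPolynomial ι ℕ), coeff_C_mul, coeff_monomial]
  simp [hx]

/-- The probability that `n` balls, thrown independently and uniformly into the bins `ι`, have
occupancy numbers in `S`. -/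
noncomputable def occupancyProb (S : Set (ι → ℕ)) (n : ℕ) : ℝ :=
  Nat.card {f : Fin n → ι // occupancy f ∈ S} / (Fintype.card ι : ℝ) ^ n

lemma occupancyProb_mem_Icc (S : Set (ι → ℕ)) (n : ℕ) : occupancyProb S n ∈ Set.Icc 0 1 := by
  refine ⟨by unfold occupancyProb; positivity, div_le_one_of_le₀ ?_ (by positivity)⟩
  have h := Finite.card_subtype_le fun f : Fin n → ι ↦ occupancy f ∈ S
  rw [Nat.card_fun, Nat.card_fin, Nat.card_eq_fintype_card (α := ι)] at h
  exact_mod_cast h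

lemma natCard_init_div [Nonempty ι] {n : ℕ} (S : Set (ι → ℕ)) :
    Nat.card {f : Fin (n + 1) → ι // occupancy (Fin.init f) ∈ S} / (Fintype.card ι : ℝ) ^ (n + 1) =
      occupancyProb S n := by
  rw [natCard_init fun f ↦ occupancy f ∈ S, Nat.card_eq_fintype_card, occupancyProb, Nat.cast_mul,
    pow_succ']
  exact mul_div_mul_left _ _ (by positivity)

lemma monotone_occupancyProb [Nonempty ι] {S : Set (ι → ℕ)} (hS : IsUpperSet S) :
    Monotone (occupancyProb S) := by
  refine monotone_nat_of_le_succ fun n ↦ ?_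
  rw [← natCard_init_div, occupancyProb]
  gcongr
  exact Nat.card_mono (t := {f : Fin (n + 1) → ι | occupancy f ∈ S}) (Set.toFinite _)
    fun f hf ↦ hS (occupancy_init_le f) hf

end Occupancy

section Poissonization

lemma measureReal_eq_tsum_inter_preimage_singleton {Ω β : Type*} [MeasurableSpace Ω]
    [MeasurableSpace β] [MeasurableSingletonClass β] [Countable β] {μ : Measure Ω}
    [IsFiniteMeasure μ] {X : Ω → β} (hX : Measurable X) (S : Set Ω) :
    μ.real S = ∑' n, μ.real (S ∩ X ⁻¹' {n}) := by
  have hfib (n : β) : MeasurableSet (X ⁻¹' {n}) := hX (measurableSet_singleton n)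
  have h := tsum_measure_preimage_singleton (μ := μ.restrict S) Set.countable_univ
    fun n _ ↦ hfib n
  rw [tsum_univ (f := fun n ↦ μ.restrict S (X ⁻¹' {n}))] at h
  simp only [Measure.restrict_apply (hfib _), Set.preimage_univ, Measure.restrict_apply_univ,
    Set.inter_comm _ S] at h
  simp only [measureReal_def]
  rw [← h, ENNReal.tsum_toReal_eq fun n ↦ measure_ne_top _ _]

variable {ι : Type*} [Fintype ι]

lemma measureReal_pi_pi {α : ι → Type*} [∀ i, MeasurableSpace (α i)]
    (μ : ∀ i, Measure (α i)) [∀ i, SigmaFinite (μ i)] (s : ∀ i, Set (α i)) :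
    (Measure.pi μ).real (Set.univ.pi s) = ∏ i, (μ i).real (s i) := by
  simp only [measureReal_def, Measure.pi_pi, ENNReal.toReal_prod]

variable [DecidableEq ι] [Nonempty ι]

lemma prod_poissonMeasure_real_singleton (r : ℝ≥0) {n : ℕ} {x : ι → ℕ}
    (hx : ∑ b, x b = n) :
    ∏ b, Po(r).real {x b} = Po(Fintype.card ι * r).real {n} *
      (#{f : Fin n → ι | occupancy f = x} / (Fintype.card ι : ℝ) ^ n) := by
  have hspec : (∏ b, (x b)! : ℝ) * Nat.multinomial univ x = n ! := by
    rw [← hx]; exact_mod_cast Nat.multinomial_spec univ x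
  have hprod : (∏ b, (x b)! : ℝ) ≠ 0 := by positivity
  have hmultinomial : (Nat.multinomial univ x : ℝ) ≠ 0 := mod_cast (Nat.multinomial_pos univ x).ne'
  rw [card_filter_occupancy_eq hx, ← mul_right_inj' hprod]
  simp only [poissonMeasure_real_singleton, prod_div_distrib, prod_mul_distrib, prod_const,
    prod_pow_eq_pow_sum, hx, card_univ, ← Real.exp_nat_mul]
  push_cast
  rw [← hspec, mul_pow]
  field_simp

lemma pi_poissonMeasure_real_inter_sum_eq (r : ℝ≥0) (S : Set (ι → ℕ)) (n : ℕ) :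
    (Measure.pi fun _ : ι ↦ Po(r)).real (S ∩ (fun x ↦ ∑ b, x b) ⁻¹' {n}) =
      Po(Fintype.card ι * r).real {n} * occupancyProb S n := by
  classical
  let T : Finset (ι → ℕ) := {x ∈ piAntidiag univ n | x ∈ S}
  have hT : S ∩ (fun x ↦ ∑ b, x b) ⁻¹' {n} = T := by ext; simp [T, and_comm]
  have hfib : Nat.card {f : Fin n → ι // occupancy f ∈ S} =
      ∑ x ∈ T, #{f : Fin n → ι | occupancy f = x} := by
    rw [Nat.card_eq_fintype_card, Fintype.card_subtype,
      card_eq_sum_card_fiberwise (f := occupancy) (t := T)]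
    · refine sum_congr rfl fun x hx ↦ ?_
      rw [filter_filter]
      congr! 2
      grind
    · intro f hf
      simpa [T, sum_occupancy] using! hf
  rw [hT, ← sum_measureReal_singleton, occupancyProb, hfib, Nat.cast_sum, sum_div, mul_sum]
  refine sum_congr rfl fun x hx ↦ ?_
  rw [← prod_poissonMeasure_real_singleton r (by simp_all [T]), measureReal_def,
    Measure.pi_singleton, ENNReal.toReal_prod]
  rfl

lemma integral_occupancyProb_poissonMeasure (r : ℝ≥0) (S : Set (ι → ℕ)) :
    ∫ n, occupancyProb S n ∂Po(Fintype.card ι * r) = (Measure.pi fun _ : ι ↦ Po(r)).real S := by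
  have hsum : Measurable fun x : ι → ℕ ↦ ∑ b, x b := by fun_prop
  rw [integral_poissonMeasure, measureReal_eq_tsum_inter_preimage_singleton hsum]
  simp only [pi_poissonMeasure_real_inter_sum_eq, poissonMeasure_real_singleton, smul_eq_mul]

lemma integral_occupancyProb_Ici_poissonMeasure (r : ℝ≥0) (κ : ι → ℕ) :
    ∫ n, occupancyProb (Set.Ici κ) n ∂Po(Fintype.card ι * r) =
      ∏ b, Po(r).real (Set.Ici (κ b)) := by
  rw [integral_occupancyProb_poissonMeasure, ← Set.pi_univ_Ici, measureReal_pi_pi]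

end Poissonization

section Asymptotics

/-- The threshold per bin, `log m + (k - 1) log log m + c`; it is the rate of the Poisson number of
balls in each bin after Poissonization at the time `collectThreshold k c m`. -/
noncomputable def thresholdRate (k : ℕ) (c : ℝ) (m : ℕ) : ℝ :=
  log m + ((k : ℝ) - 1) * log (log m) + c

lemma collectThreshold_eq_mul_thresholdRate (k : ℕ) (c : ℝ) (m : ℕ) :
    collectThreshold k c m = m * thresholdRate k c m := by
  unfold collectThreshold thresholdRate
  ring

lemma tendsto_log_natCast_atTop : Tendsto (fun m : ℕ ↦ log m) atTop atTop :=
  tendsto_log_atTop.comp tendsto_natCast_atTop_atTop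

lemma tendsto_log_div_self : Tendsto (fun x : ℝ ↦ log x / x) atTop (𝓝 0) :=
  isLittleO_log_id_atTop.tendsto_div_nhds_zero

lemma tendsto_thresholdRate_div_log (k : ℕ) (c : ℝ) :
    Tendsto (fun m : ℕ ↦ thresholdRate k c m / log m) atTop (𝓝 1) := by
  have hloglog := tendsto_log_div_self.comp tendsto_log_natCast_atTop
  have hlim := ((hloglog.const_mul ((k : ℝ) - 1)).const_add 1).add
    (tendsto_log_natCast_atTop.inv_tendsto_atTop.const_mul c)
  simp only [mul_zero, add_zero] at hlim
  refine hlim.congr' ?_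
  filter_upwards [tendsto_log_natCast_atTop.eventually_gt_atTop 0] with m hlog
  simp only [thresholdRate, Function.comp_apply, Pi.inv_apply]
  field_simp

lemma eventually_thresholdRate_pos (k : ℕ) (c : ℝ) :
    ∀ᶠ m : ℕ in atTop, 0 < thresholdRate k c m := by
  filter_upwards [(tendsto_thresholdRate_div_log k c).eventually_const_lt zero_lt_one,
    tendsto_log_natCast_atTop.eventually_gt_atTop 0] with m hdiv hlog
  exact (div_pos_iff_of_pos_right hlog).mp hdiv

lemma mul_exp_neg_thresholdRate {k : ℕ} (hk : 1 ≤ k) (c : ℝ) {m : ℕ} (hm : 0 < m)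
    (hlog : 0 < log m) :
    m * exp (-thresholdRate k c m) * log m ^ (k - 1) = exp (-c) := by
  have hm' : (0 : ℝ) < m := mod_cast hm
  rw [thresholdRate, ← Nat.cast_pred hk, neg_add, neg_add, exp_add, exp_add, exp_neg (log m),
    exp_neg (_ * _), exp_log hm', exp_nat_mul, exp_log hlog]
  field_simp

lemma tendsto_mul_poissonMeasure_singleton {i k : ℕ} (hi : i < k) (c : ℝ) :
    Tendsto (fun m : ℕ ↦ m * Po((thresholdRate k c m).toNNReal).real {i}) atTop
      (𝓝 (if i = k - 1 then exp (-c) / i ! else 0)) := by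
  have hk : 1 ≤ k := by lia
  have hlim := (((tendsto_thresholdRate_div_log k c).pow i).mul
    (tendsto_log_natCast_atTop.inv_tendsto_atTop.pow (k - 1 - i))).const_mul (exp (-c) / i !)
  have hval : exp (-c) / i ! * (1 ^ i * 0 ^ (k - 1 - i)) =
      if i = k - 1 then exp (-c) / i ! else 0 := by
    rw [zero_pow_eq, one_pow]
    grind
  rw [hval] at hlim
  refine hlim.congr' ?_
  filter_upwards [tendsto_log_natCast_atTop.eventually_gt_atTop 0, eventually_gt_atTop 0,
    eventually_thresholdRate_pos k c] with m hlog hm hrate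
  have hpow : log m ^ (k - 1) = log m ^ (k - 1 - i) * log m ^ i := by
    rw [← pow_add, Nat.sub_add_cancel (by lia)]
  rw [poissonMeasure_real_singleton, Real.coe_toNNReal _ hrate.le,
    ← mul_exp_neg_thresholdRate hk c hm hlog, hpow, Pi.inv_apply, div_pow, inv_pow]
  field_simp

lemma tendsto_mul_poissonMeasure_Iio {k : ℕ} (hk : 1 ≤ k) (c : ℝ) :
    Tendsto (fun m : ℕ ↦ m * Po((thresholdRate k c m).toNNReal).real (Set.Iio k)) atTop
      (𝓝 (exp (-c) / (k - 1)!)) := by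
  have hlim := tendsto_finsetSum (range k) fun i hi ↦
    tendsto_mul_poissonMeasure_singleton (mem_range.mp hi) c
  rw [sum_ite_eq' (range k), if_pos (mem_range.mpr (by lia))] at hlim
  simpa only [poissonMeasure_real_Iio, mul_sum] using hlim

/-- The probability that each of `m` bins holds at least `k` balls after Poissonization, that is,
when the bins are filled by independent Poisson numbers of balls of rate `thresholdRate k c m`. -/
noncomputable def poissonizedProb (k : ℕ) (c : ℝ) (m : ℕ) : ℝ :=
  Po((thresholdRate k c m).toNNReal).real (Set.Ici k) ^ m

lemma tendsto_poissonizedProb {k : ℕ} (hk : 1 ≤ k) (c : ℝ) :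
    Tendsto (poissonizedProb k c) atTop (𝓝 (exp (-(exp (-c) / (k - 1)!)))) := by
  have hcompl (m : ℕ) : poissonizedProb k c m =
      (1 + -Po((thresholdRate k c m).toNNReal).real (Set.Iio k)) ^ m := by
    rw [poissonizedProb, ← Set.compl_Iio, probReal_compl_eq_one_sub .of_discrete, sub_eq_add_neg]
  simp only [funext hcompl]
  exact tendsto_one_add_pow_exp_of_tendsto <| by
    simpa only [mul_neg] using (tendsto_mul_poissonMeasure_Iio hk c).neg

lemma tendsto_mul_thresholdRate_div_sq (k : ℕ) (c : ℝ) (ε : ℝ) :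
    Tendsto (fun m : ℕ ↦ m * thresholdRate k c m / (ε * m) ^ 2) atTop (𝓝 0) := by
  have hlim := ((tendsto_thresholdRate_div_log k c).mul
    (tendsto_log_div_self.comp tendsto_natCast_atTop_atTop)).div_const (ε ^ 2)
  rw [mul_zero, zero_div] at hlim
  refine hlim.congr' ?_
  filter_upwards [tendsto_log_natCast_atTop.eventually_gt_atTop 0, eventually_gt_atTop 0]
    with m hlog hm
  have hm' : (m : ℝ) ≠ 0 := by positivity
  simp only [Function.comp_apply]
  field_simp

end Asymptotics

section Collect

lemma exists_collect_iff {m n k : ℕ} {x : ℝ} (hnx : n < x) (hxn : x ≤ n + 1)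
    (f : Fin (n + 1) → Fin m) :
    (∃ t : ℕ, (t : ℝ) < x ∧ ∀ b, k ≤ Nat.card {s : Fin (n + 1) // (s : ℕ) < t ∧ f s = b}) ↔
      occupancy (Fin.init f) ∈ Set.Ici fun _ ↦ k := by
  simp only [Set.mem_Ici, Pi.le_def, ← natCard_lt_and_eq]
  refine ⟨fun ⟨t, htx, ht⟩ b ↦ (ht b).trans (natCard_lt_and_eq_mono ?_ f b), fun h ↦ ⟨n, hnx, h⟩⟩
  exact Nat.lt_add_one_iff.mp (mod_cast htx.trans_le hxn)

lemma exists_probCollectBeforeThreshold_eq (k : ℕ) (c : ℝ) {m : ℕ} [NeZero m]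
    (hrate : 0 < thresholdRate k c m) :
    ∃ n : ℕ, n < m * thresholdRate k c m ∧ m * thresholdRate k c m ≤ n + 1 ∧
      probCollectBeforeThreshold k c m = occupancyProb (Set.Ici fun _ : Fin m ↦ k) n := by
  have hm : (0 : ℝ) < m := mod_cast NeZero.pos m
  rw [← collectThreshold_eq_mul_thresholdRate]
  have hpos : 0 < collectThreshold k c m := by
    rw [collectThreshold_eq_mul_thresholdRate]
    positivity
  obtain ⟨n, hn⟩ := Nat.exists_eq_add_one.mpr (Nat.ceil_pos.mpr hpos)
  have hlt : n < collectThreshold k c m := Nat.lt_ceil.mp (by lia)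
  have hle : collectThreshold k c m ≤ n + 1 := mod_cast hn ▸ Nat.le_ceil (collectThreshold k c m)
  refine ⟨n, hlt, hle, ?_⟩
  rw [probCollectBeforeThreshold, hn, ← natCard_init_div, Fintype.card_fin]
  simp only [exists_collect_iff hlt hle]

lemma integral_occupancyProb_eq_poissonizedProb (k : ℕ) (c : ℝ) (m : ℕ) [NeZero m] :
    ∫ n, occupancyProb (Set.Ici fun _ : Fin m ↦ k) n ∂Po(m * (thresholdRate k c m).toNNReal) =
      poissonizedProb k c m := by
  simpa [poissonizedProb] using
    integral_occupancyProb_Ici_poissonMeasure (thresholdRate k c m).toNNReal fun _ : Fin m ↦ k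

lemma thresholdRate_sub (k : ℕ) (c c' : ℝ) (m : ℕ) :
    thresholdRate k c' m - thresholdRate k c m = c' - c := by
  unfold thresholdRate
  ring

lemma eventually_probCollectBeforeThreshold_le (k : ℕ) {c c' : ℝ} (hc : c < c') :
    ∀ᶠ m : ℕ in atTop, probCollectBeforeThreshold k c m ≤
      poissonizedProb k c' m + m * thresholdRate k c' m / ((c' - c) * m) ^ 2 := by
  filter_upwards [eventually_gt_atTop 0, eventually_thresholdRate_pos k c,
    eventually_thresholdRate_pos k c'] with m hm hrate hrate'
  have : NeZero m := ⟨hm.ne'⟩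
  obtain ⟨n, hn, -, hprob⟩ := exists_probCollectBeforeThreshold_eq k c hrate
  have hd : 0 < (c' - c) * m := mul_pos (sub_pos.mpr hc) (mod_cast hm)
  have hcoe : ((m * (thresholdRate k c' m).toNNReal : ℝ≥0) : ℝ) = m * thresholdRate k c' m := by
    simp [hrate'.le]
  have hbound := le_integral_poissonMeasure_add (monotone_occupancyProb (isUpperSet_Ici _))
    (occupancyProb_mem_Icc (Set.Ici fun _ : Fin m ↦ k)) hd (n := n)
    (r := m * (thresholdRate k c' m).toNNReal) (by
      rw [hcoe, ← thresholdRate_sub k c c' m]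
      linarith)
  rwa [hcoe, integral_occupancyProb_eq_poissonizedProb, ← hprob] at hbound

lemma eventually_le_probCollectBeforeThreshold (k : ℕ) {c c' : ℝ} (hc : c' < c) :
    ∀ᶠ m : ℕ in atTop, poissonizedProb k c' m - m * thresholdRate k c' m / ((c - c') * m) ^ 2 ≤
      probCollectBeforeThreshold k c m := by
  filter_upwards [eventually_gt_atTop 0, eventually_thresholdRate_pos k c,
    eventually_thresholdRate_pos k c'] with m hm hrate hrate'
  have : NeZero m := ⟨hm.ne'⟩
  obtain ⟨n, -, hn, hprob⟩ := exists_probCollectBeforeThreshold_eq k c hrate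
  have hd : 0 < (c - c') * m := mul_pos (sub_pos.mpr hc) (mod_cast hm)
  have hcoe : ((m * (thresholdRate k c' m).toNNReal : ℝ≥0) : ℝ) = m * thresholdRate k c' m := by
    simp [hrate'.le]
  have hbound := integral_poissonMeasure_le_add (monotone_occupancyProb (isUpperSet_Ici _))
    (occupancyProb_mem_Icc (Set.Ici fun _ : Fin m ↦ k)) hd (n := n)
    (r := m * (thresholdRate k c' m).toNNReal) (by
      rw [hcoe, ← thresholdRate_sub k c' c m]
      linarith)
  rwa [hcoe, integral_occupancyProb_eq_poissonizedProb, ← hprob, ← sub_le_iff_le_add] at hbound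

end Collect

section Squeeze

variable {α β γ : Type*} [TopologicalSpace β] [Preorder β] [TopologicalSpace γ] [LinearOrder γ]
  [OrderTopology γ]

lemma tendsto_of_forall_lt_of_forall_gt {l : Filter α} {u : α → γ} {G : β → γ} {c : β}
    [(𝓝[<] c).NeBot] [(𝓝[>] c).NeBot] (hG : ContinuousAt G c)
    (hlower : ∀ c' < c, ∃ v, Tendsto v l (𝓝 (G c')) ∧ ∀ᶠ a in l, v a ≤ u a)
    (hupper : ∀ c' > c, ∃ v, Tendsto v l (𝓝 (G c')) ∧ ∀ᶠ a in l, u a ≤ v a) :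
    Tendsto u l (𝓝 (G c)) := by
  refine tendsto_order.mpr ⟨fun y hy ↦ ?_, fun y hy ↦ ?_⟩
  · obtain ⟨c', hyc', hc'⟩ := (((hG.eventually_const_lt hy).filter_mono
      nhdsWithin_le_nhds).and (self_mem_nhdsWithin (s := Set.Iio c))).exists
    obtain ⟨v, hv, hvu⟩ := hlower c' hc'
    filter_upwards [hv.eventually_const_lt hyc', hvu] with a hya hva using hya.trans_le hva
  · obtain ⟨c', hyc', hc'⟩ := (((hG.eventually_lt_const hy).filter_mono
      nhdsWithin_le_nhds).and (self_mem_nhdsWithin (s := Set.Ioi c))).exists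
    obtain ⟨v, hv, huv⟩ := hupper c' hc'
    filter_upwards [hv.eventually_lt_const hyc', huv] with a hya hua using hua.trans_lt hya

end Squeeze

/-- Erdős–Rényi, balls and bins: for fixed `k ≥ 1` and `c : ℝ`,
`P(T_k(m) < m·log m + (k−1)·m·log log m + c·m) → exp(−e^{−c}/(k−1)!)` as `m → ∞`. -/
theorem stmt_0 (k : ℕ) (hk : 1 ≤ k) (c : ℝ) :
    Filter.Tendsto (probCollectBeforeThreshold k c) Filter.atTop
      (nhds (Real.exp (-(Real.exp (-c) / (Nat.factorial (k - 1)))))) := by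
  have hcont : ContinuousAt (fun c ↦ exp (-(exp (-c) / (k - 1)!))) c := by fun_prop
  refine tendsto_of_forall_lt_of_forall_gt (G := fun c ↦ exp (-(exp (-c) / (k - 1)!))) hcont
    (fun c' hc' ↦ ?_) (fun c' hc' ↦ ?_)
  · refine ⟨_, ?_, eventually_le_probCollectBeforeThreshold k hc'⟩
    simpa using (tendsto_poissonizedProb hk c').sub (tendsto_mul_thresholdRate_div_sq k c' (c - c'))
  · refine ⟨_, ?_, eventually_probCollectBeforeThreshold_le k hc'⟩
    simpa using (tendsto_poissonizedProb hk c').add (tendsto_mul_thresholdRate_div_sq k c' (c' - c))
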